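/- Let δ ≥ 1 and H = 2^{δ−1}. Let w be a bispecial factor of v_δ such that π(w) contains at least H letters a and at least H letters b. Then for every return word v to w in v_δ there exist natural numbers N, κ, λ with κ + λ ≥ 1 such that: (1) |w| = F_{N+3} − 2; (2) |v| = H(κF_{N+2} + λF_{N+1}); and (3) |κ − τλ| < τ²/H. -/

import Mathlib

open Filter

/-- The golden mean τ = (1+√5)/2. -/
noncomputable def tau : ℝ := (1 + Real.sqrt 5) / 2

/-- The Fibonacci morphism φ on the alphabet {a, b}; we encode a = `false`, b = `true`,
so φ(a) = ab and φ(b) = a. -/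
def phi : Bool → List Bool
  | false => [false, true]
  | true  => [false]

/-- Application of the morphism φ to a finite word. -/
def phiW (w : List Bool) : List Bool := w.flatMap phi

/-- φⁿ(a). -/
def phiIter (n : ℕ) : List Bool := phiW^[n] [false]

/-- The Fibonacci word, i.e. the fixed point of φ beginning with a (= `false`):
the unique sequence having φⁿ(a) as a prefix for every n. -/
def fibWord (i : ℕ) : Bool := (phiIter (i + 1)).getD i false

/-- The factor of the sequence `u` of length `n` occurring at index `i`. -/
def factorAt {α : Type*} (u : ℕ → α) (i n : ℕ) : List α :=
  (List.range n).map fun k => u (i + k)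

/-- The finite word `w` occurs in the sequence `u` at index `i`. -/
def OccursAt {α : Type*} (u : ℕ → α) (w : List α) (i : ℕ) : Prop :=
  factorAt u i w.length = w

/-- `w` is a factor of the sequence `u`. -/
def IsFactor {α : Type*} (u : ℕ → α) (w : List α) : Prop :=
  ∃ i, OccursAt u w i

/-- `v` is the return word to `w` in `u` occurring at index `i`: `i` and `j = i + |v|`
are consecutive occurrences of `w` in `u`, and `v = u_i u_{i+1} ⋯ u_{j-1}`. -/
def IsReturnWordAt {α : Type*} (u : ℕ → α) (w v : List α) (i : ℕ) : Prop :=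
  ∃ j, i < j ∧ OccursAt u w i ∧ OccursAt u w j ∧
    (∀ m, i < m → m < j → ¬ OccursAt u w m) ∧ v = factorAt u i (j - i)

/-- `v` is a return word to `w` in `u`. -/
def IsReturnWord {α : Type*} (u : ℕ → α) (w v : List α) : Prop :=
  ∃ i, IsReturnWordAt u w v i

/-- The factor `w` of `u` is bispecial: it can be extended to the right by two distinct
letters and to the left by two distinct letters. -/
def IsBispecial {α : Type*} (u : ℕ → α) (w : List α) : Prop :=
  IsFactor u w ∧
  (∃ x y : α, x ≠ y ∧ IsFactor u (w ++ [x]) ∧ IsFactor u (w ++ [y])) ∧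
  (∃ z t : α, z ≠ t ∧ IsFactor u (z :: w) ∧ IsFactor u (t :: w))

/-- The constant gap sequence y_δ over {1,…,δ}: y_δ(i) = 1 if 2^(δ-1) ∣ i,
and y_δ(i) = δ - ν₂(i) otherwise (ν₂ = 2-adic valuation). -/
def yseq (δ : ℕ) (i : ℕ) : ℕ :=
  if 2 ^ (δ - 1) ∣ i then 1 else δ - padicValNat 2 i

/-- Number of occurrences of the letter `c` among `u 0, …, u (i-1)`. -/
def countLetter (u : ℕ → Bool) (c : Bool) (i : ℕ) : ℕ :=
  (List.range i).countP fun k => u k == c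

/-- The colouring v_δ of the Fibonacci word by y_δ and its hatted copy ŷ_δ:
`Sum.inl k` encodes the letter k ∈ {1,…,δ} and `Sum.inr k` the hatted letter k̂. -/
def vdelta (δ : ℕ) (i : ℕ) : ℕ ⊕ ℕ :=
  if fibWord i = false then Sum.inl (yseq δ (countLetter fibWord false i))
  else Sum.inr (yseq δ (countLetter fibWord true i))

/-- The discolouration map π sending each unhatted letter to a (= `false`) and each
hatted letter to b (= `true`); thus π(v_δ) = f letterwise. -/
def piMap : ℕ ⊕ ℕ → Bool := Sum.elim (fun _ => false) (fun _ => true)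

/-!
Let `A i`, `B i` denote the numbers of letters `a`, `b` among the first `i` letters of the Fibonacci
word `f`, and `H = 2^(δ-1)`.

*Colours.* The value `y_δ i` depends on `i` modulo `H` only, and equals `1` exactly at multiples of
`H`. Hence a factor of `v_δ` with at least `H` letters of each kind determines `A i` and `B i`
modulo `H` at each of its occurrences `i` (`countLetter_modEq`), so its extensions are determined by
their projections, and the projection of a bispecial factor is a bispecial factor of `f`
(`IsBispecial.discolour`).

*Desubstitution.* Put `s m = |φ(f₀⋯f_{m-1})| = m + A m`; the letters `a` of `f` are exactly at the
indices `s m`. A nonempty bispecial factor begins and ends with `a`, hence is `φ(u)a` with `u`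
bispecial, and its occurrences are the `s m` with `m` an occurrence of `u`. Iterating, a bispecial
factor is the `N`-th word of the sequence `ε, a, aba, …`, which has length `F_{N+3} - 2`, and each of
its occurrences `i` comes from some `m` with `i = F_{N+2} A m + F_{N+1} B m` and
`A i = F_{N+1} A m + F_N B m` (`occursAt_bispecialWord`).

*Conclusion.* For consecutive occurrences `i < j` coming from `m < n`, the differences `j - i` and
`A j - A i` are divisible by `H`; the Fibonacci matrix being unimodular, so are
`A n - A m = H κ` and `B n - B m = H λ`. Finally `A m - τ B m` lies in the open interval `(-1, τ)`,
of length `τ²`, for every `m` (`discrepancy`), which bounds `H (κ - τ λ)`.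
-/

/-! ### Occurrences of finite words -/

lemma factorAt_length {α : Type*} (u : ℕ → α) (i n : ℕ) : (factorAt u i n).length = n := by
  simp [factorAt]

lemma factorAt_succ {α : Type*} (u : ℕ → α) (i n : ℕ) :
    factorAt u i (n + 1) = factorAt u i n ++ [u (i + n)] := by
  simp [factorAt, List.range_succ]

lemma occursAt_iff {α : Type*} (u : ℕ → α) (w : List α) (i : ℕ) :
    OccursAt u w i ↔ ∀ k (hk : k < w.length), u (i + k) = w[k] := by
  unfold OccursAt
  constructor
  · intro h k hk
    have h2 : (factorAt u i w.length)[k]'(by rw [factorAt_length]; exact hk) = w[k] := by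
      congr 1
    simpa [factorAt] using h2
  · intro h
    apply List.ext_getElem (factorAt_length _ _ _)
    intro k h1 h2
    simpa [factorAt] using h k h2

lemma occursAt_nil {α : Type*} (u : ℕ → α) (i : ℕ) : OccursAt u [] i := by
  simp [OccursAt, factorAt]

lemma occursAt_cons {α : Type*} (u : ℕ → α) (x : α) (w : List α) (i : ℕ) :
    OccursAt u (x :: w) i ↔ u i = x ∧ OccursAt u w (i + 1) := by
  rw [occursAt_iff, occursAt_iff]
  constructor
  · intro h
    refine ⟨h 0 (by simp), fun k hk => ?_⟩
    have := h (k + 1) (by simpa using hk)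
    simpa [add_assoc, add_comm, add_left_comm] using this
  · rintro ⟨h0, h⟩ k hk
    cases k with
    | zero => simpa using h0
    | succ k =>
      have := h k (by simpa using hk)
      simpa [add_assoc, add_comm, add_left_comm] using this

lemma occursAt_append {α : Type*} (u : ℕ → α) (w w' : List α) (i : ℕ) :
    OccursAt u (w ++ w') i ↔ OccursAt u w i ∧ OccursAt u w' (i + w.length) := by
  induction w generalizing i with
  | nil => simp [occursAt_nil]
  | cons x w ih =>
    rw [List.cons_append, occursAt_cons, occursAt_cons, ih, List.length_cons, and_assoc,
      add_assoc, add_comm 1]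

/-! ### Letter counts -/

lemma countLetter_zero (u : ℕ → Bool) (c : Bool) : countLetter u c 0 = 0 := by
  simp [countLetter]

lemma countLetter_succ (u : ℕ → Bool) (c : Bool) (i : ℕ) :
    countLetter u c (i + 1) = countLetter u c i + if u i = c then 1 else 0 := by
  simp [countLetter, List.range_succ, List.countP_append, List.countP_singleton]

lemma countLetter_mono (u : ℕ → Bool) (c : Bool) : Monotone (countLetter u c) :=
  monotone_nat_of_le_succ fun n => by rw [countLetter_succ]; omega

lemma countLetter_add_countLetter (u : ℕ → Bool) (i : ℕ) :
    countLetter u false i + countLetter u true i = i := by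
  induction i with
  | zero => simp [countLetter_zero]
  | succ i ih =>
    rw [countLetter_succ, countLetter_succ]
    cases u i <;> simp <;> omega

lemma count_factorAt (u : ℕ → Bool) (c : Bool) (i n : ℕ) :
    countLetter u c (i + n) = countLetter u c i + (factorAt u i n).count c := by
  induction n with
  | zero => simp [factorAt]
  | succ n ih =>
    rw [← add_assoc, countLetter_succ, factorAt_succ, List.count_append, ih, List.count_singleton]
    simp [add_assoc]

/-- The position of the letter of prescribed rank `k` among the occurrences of `c` in a window. -/
lemma exists_countLetter_eq (u : ℕ → Bool) (c : Bool) (i n k : ℕ) (h1 : countLetter u c i ≤ k)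
    (h2 : k < countLetter u c (i + n)) :
    ∃ t < n, u (i + t) = c ∧ countLetter u c (i + t) = k := by
  induction n with
  | zero => simp at h2; omega
  | succ n ih =>
    by_cases h : k < countLetter u c (i + n)
    · obtain ⟨t, ht, h'⟩ := ih h
      exact ⟨t, by omega, h'⟩
    · rw [← add_assoc, countLetter_succ] at h2
      by_cases hc : u (i + n) = c
      · rw [if_pos hc] at h2
        exact ⟨n, by omega, hc, by omega⟩
      · rw [if_neg hc] at h2
        omega

/-! ### The Fibonacci word as a fixed point -/

lemma phiW_append (u v : List Bool) : phiW (u ++ v) = phiW u ++ phiW v := by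
  simp [phiW]

lemma phiW_length (u : List Bool) : (phiW u).length = u.length + u.count false := by
  induction u with
  | nil => simp [phiW]
  | cons x u ih =>
    have : phiW (x :: u) = phi x ++ phiW u := by simp [phiW]
    rw [this, List.length_append, ih]
    cases x <;> simp [phi] <;> omega

lemma phiW_count (u : List Bool) : (phiW u).count false = u.length := by
  induction u with
  | nil => simp [phiW]
  | cons x u ih =>
    have : phiW (x :: u) = phi x ++ phiW u := by simp [phiW]
    rw [this, List.count_append, ih]
    cases x <;> simp [phi] <;> omega

lemma phiIter_succ (n : ℕ) : phiIter (n + 1) = phiW (phiIter n) :=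
  Function.iterate_succ_apply' _ _ _

lemma phiW_prefix {u v : List Bool} (h : u <+: v) : phiW u <+: phiW v := by
  obtain ⟨t, rfl⟩ := h
  rw [phiW_append]
  exact List.prefix_append _ _

lemma phiIter_prefix_succ (n : ℕ) : phiIter n <+: phiIter (n + 1) := by
  induction n with
  | zero => exact ⟨[true], rfl⟩
  | succ n ih =>
    rw [phiIter_succ n, phiIter_succ (n + 1)]
    exact phiW_prefix ih

lemma phiIter_prefix {m n : ℕ} (h : m ≤ n) : phiIter m <+: phiIter n := by
  induction n, h using Nat.le_induction with
  | base => exact List.prefix_rfl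
  | succ n _ ih => exact ih.trans (phiIter_prefix_succ n)

lemma lt_phiIter_length (n : ℕ) : n < (phiIter n).length ∧ 0 < (phiIter n).count false := by
  induction n with
  | zero => simp [phiIter]
  | succ n ih =>
    rw [phiIter_succ, phiW_length, phiW_count]
    omega

lemma fibWord_eq_getElem (n i : ℕ) (h : i < (phiIter n).length) :
    fibWord i = (phiIter n)[i] := by
  have h1 : i < (phiIter (i + 1)).length := by
    have := (lt_phiIter_length (i + 1)).1
    omega
  unfold fibWord
  rw [List.getD_eq_getElem _ _ h1]
  rcases le_total (i + 1) n with h' | h'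
  · exact (phiIter_prefix h').getElem h1
  · exact ((phiIter_prefix h').getElem h).symm

lemma eq_factorAt_of_prefix {u : List Bool} {n : ℕ} (h : u <+: phiIter n) :
    u = factorAt fibWord 0 u.length := by
  apply List.ext_getElem (factorAt_length _ _ _).symm
  intro k h1 h2
  have := h.length_le
  rw [h.getElem h1, ← fibWord_eq_getElem n k (by omega)]
  simp [factorAt]

lemma factorAt_prefix (n : ℕ) : factorAt fibWord 0 n <+: phiIter n := by
  have h := (lt_phiIter_length n).1
  have h2 := eq_factorAt_of_prefix (List.take_prefix n (phiIter n))
  rw [List.length_take, min_eq_left h.le] at h2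
  rw [← h2]
  exact List.take_prefix _ _

/-- The length `|φ(f₀⋯f_{n-1})|`: the index at which the image of the letter of index `n` starts
in the Fibonacci word. -/
def blockStart (n : ℕ) : ℕ := n + countLetter fibWord false n

lemma phiW_factorAt (n : ℕ) :
    phiW (factorAt fibWord 0 n) = factorAt fibWord 0 (blockStart n) := by
  have h := phiW_prefix (factorAt_prefix n)
  rw [← phiIter_succ] at h
  have h2 := eq_factorAt_of_prefix h
  rw [h2, phiW_length, factorAt_length]
  have := count_factorAt fibWord false 0 n
  rw [zero_add, countLetter_zero, zero_add] at this
  rw [← this, blockStart]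

lemma blockStart_succ (n : ℕ) :
    blockStart (n + 1) = blockStart n + if fibWord n = false then 2 else 1 := by
  unfold blockStart
  rw [countLetter_succ]
  split_ifs <;> omega

lemma phiW_factorAt_succ (n : ℕ) :
    factorAt fibWord 0 (blockStart n) ++ phi (fibWord n) =
      factorAt fibWord 0 (blockStart (n + 1)) := by
  rw [← phiW_factorAt, ← phiW_factorAt, factorAt_succ, phiW_append, zero_add]
  simp [phiW]

lemma fibWord_blockStart (n : ℕ) : fibWord (blockStart n) = false := by
  have h := phiW_factorAt_succ n
  rw [blockStart_succ] at h
  cases hn : fibWord n <;> rw [hn] at h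
  · rw [if_pos rfl, ← add_assoc (blockStart n) 1 1, factorAt_succ, factorAt_succ,
      List.append_assoc] at h
    have := List.append_cancel_left h
    simp [phi] at this
    exact this.1
  · rw [if_neg (by decide), factorAt_succ] at h
    have := List.append_cancel_left h
    simpa [phi] using this.symm

lemma fibWord_blockStart_succ (n : ℕ) : fibWord (blockStart n + 1) = !fibWord n := by
  have h := phiW_factorAt_succ n
  have hs := blockStart_succ n
  cases hn : fibWord n <;> rw [hn] at h hs
  · rw [hs, if_pos rfl, ← add_assoc (blockStart n) 1 1, factorAt_succ, factorAt_succ,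
      List.append_assoc] at h
    have := List.append_cancel_left h
    simp [phi] at this
    simpa using this.2.symm
  · rw [if_neg (by decide)] at hs
    rw [← hs, fibWord_blockStart]
    rfl

lemma exists_block (i : ℕ) :
    ∃ n, i = blockStart n ∨ (i = blockStart n + 1 ∧ fibWord n = false) := by
  induction i with
  | zero => exact ⟨0, Or.inl (by simp [blockStart, countLetter_zero])⟩
  | succ i ih =>
    obtain ⟨n, rfl | ⟨rfl, hn⟩⟩ := ih
    · cases hn : fibWord n
      · exact ⟨n, Or.inr ⟨rfl, hn⟩⟩
      · exact ⟨n + 1, Or.inl (by rw [blockStart_succ, hn]; simp)⟩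
    · exact ⟨n + 1, Or.inl (by rw [blockStart_succ, hn]; simp)⟩

lemma exists_blockStart_of_false {i : ℕ} (h : fibWord i = false) : ∃ n, i = blockStart n := by
  obtain ⟨n, rfl | ⟨rfl, hn⟩⟩ := exists_block i
  · exact ⟨n, rfl⟩
  · rw [fibWord_blockStart_succ, hn] at h
    simp at h

lemma exists_blockStart_of_true {i : ℕ} (h : fibWord i = true) :
    ∃ n, i + 1 = blockStart (n + 1) ∧ fibWord n = false := by
  obtain ⟨n, rfl | ⟨rfl, hn⟩⟩ := exists_block i
  · rw [fibWord_blockStart] at h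
    simp at h
  · exact ⟨n, by rw [blockStart_succ, hn]; simp, hn⟩

lemma fibWord_succ_of_true {i : ℕ} (h : fibWord i = true) : fibWord (i + 1) = false := by
  obtain ⟨n, hn, -⟩ := exists_blockStart_of_true h
  rw [hn, fibWord_blockStart]

lemma countLetter_blockStart (n : ℕ) : countLetter fibWord false (blockStart n) = n := by
  induction n with
  | zero => simp [blockStart, countLetter_zero]
  | succ n ih =>
    rw [blockStart_succ]
    cases hn : fibWord n
    · rw [if_pos rfl, ← add_assoc (blockStart n) 1 1, countLetter_succ, countLetter_succ, ih,
        fibWord_blockStart, fibWord_blockStart_succ, hn]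
      simp
    · rw [if_neg (by decide), countLetter_succ, ih, fibWord_blockStart]
      simp

/-! ### Desubstitution of bispecial factors -/

/-- Synchronisation: `φ(u)a` occurs at the start of an image of a letter exactly when `u` occurs
at that letter. -/
lemma occursAt_phiW (u : List Bool) (i : ℕ) :
    OccursAt fibWord (phiW u ++ [false]) (blockStart i) ↔ OccursAt fibWord u i := by
  induction u generalizing i with
  | nil =>
    have : phiW [] ++ [false] = [false] := rfl
    simp [this, occursAt_cons, occursAt_nil, fibWord_blockStart]
  | cons x u ih =>
    have hs := blockStart_succ i
    have hb := fibWord_blockStart_succ i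
    rw [occursAt_cons fibWord x u, ← ih (i + 1)]
    cases x
    · have : phiW (false :: u) ++ [false] = false :: true :: (phiW u ++ [false]) := rfl
      rw [this, occursAt_cons, occursAt_cons, hb]
      cases hi : fibWord i
      · rw [hi, if_pos rfl] at hs
        simp [hs, fibWord_blockStart, add_assoc]
      · simp
    · have : phiW (true :: u) ++ [false] = false :: (phiW u ++ [false]) := rfl
      rw [this, occursAt_cons]
      cases hi : fibWord i
      · -- the letter after the block start is `b`, whereas `φ(u)a` begins with `a`
        have hx : ∃ t, phiW u ++ [false] = false :: t := by
          cases u with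
          | nil => exact ⟨[], rfl⟩
          | cons y u => cases y <;> exact ⟨_, rfl⟩
        obtain ⟨t, ht⟩ := hx
        rw [hi] at hb
        rw [ht, occursAt_cons, hb]
        simp
      · rw [hi, if_neg (by decide)] at hs
        simp [hs, fibWord_blockStart]

lemma occursAt_phiW' (u : List Bool) (j : ℕ) (h : OccursAt fibWord (phiW u ++ [false]) j) :
    ∃ i, j = blockStart i ∧ OccursAt fibWord u i := by
  have h0 : fibWord j = false := by
    have hx : ∃ t, phiW u ++ [false] = false :: t := by
      cases u with
      | nil => exact ⟨[], rfl⟩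
      | cons y u => cases y <;> exact ⟨_, rfl⟩
    obtain ⟨t, ht⟩ := hx
    rw [ht, occursAt_cons] at h
    exact h.1
  obtain ⟨i, rfl⟩ := exists_blockStart_of_false h0
  exact ⟨i, rfl, (occursAt_phiW u i).1 h⟩

/-- The image of the occurrence of `u` at index `i` ends where the next image starts. -/
lemma blockStart_add {u : List Bool} {i : ℕ} (h : OccursAt fibWord u i) :
    blockStart (i + u.length) = blockStart i + (phiW u).length := by
  unfold blockStart
  rw [count_factorAt, phiW_length, h]
  omega

lemma exists_desubst (u : List Bool) (i : ℕ)
    (h : OccursAt fibWord (u ++ [false]) (blockStart i)) :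
    ∃ u', u = phiW u' := by
  induction hl : u.length using Nat.strong_induction_on generalizing u i with
  | _ l ih =>
    have hs := blockStart_succ i
    have hb := fibWord_blockStart_succ i
    match u, h, hl with
    | [], _, _ => exact ⟨[], rfl⟩
    | x :: t, h, hl =>
      rw [List.cons_append, occursAt_cons, fibWord_blockStart] at h
      obtain ⟨rfl, h⟩ := h
      cases hi : fibWord i
      · rw [hi] at hb
        rw [hi, if_pos rfl] at hs
        cases t with
        | nil =>
          rw [List.nil_append, occursAt_cons, hb] at h
          simp at h
        | cons y t =>
          rw [List.cons_append, occursAt_cons, hb] at h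
          obtain ⟨rfl, h⟩ := h
          rw [add_assoc, ← hs] at h
          obtain ⟨t', rfl⟩ := ih t.length (by simp at hl; omega) t (i + 1) h rfl
          exact ⟨false :: t', rfl⟩
      · rw [hi, if_neg (by decide)] at hs
        rw [← hs] at h
        obtain ⟨t', rfl⟩ := ih t.length (by simp at hl; omega) t (i + 1) h rfl
        exact ⟨true :: t', rfl⟩

/-- For the binary alphabet, both letters occur as extensions of a bispecial factor. -/
lemma IsBispecial.extensions {u : ℕ → Bool} {w : List Bool} (h : IsBispecial u w) (c : Bool) :
    IsFactor u (w ++ [c]) ∧ IsFactor u (c :: w) := by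
  obtain ⟨-, ⟨x, y, hxy, hx, hy⟩, ⟨z, t, hzt, hz, ht⟩⟩ := h
  constructor
  · cases x <;> cases y <;> cases c <;> simp_all
  · cases z <;> cases t <;> cases c <;> simp_all

/-- The bispecial factors of the Fibonacci word: `ε, a, aba, abaaba, …`. -/
def bispecialWord : ℕ → List Bool
  | 0 => []
  | n + 1 => phiW (bispecialWord n) ++ [false]

/-- A nonempty bispecial factor is `φ(u)a` for a bispecial factor `u`. -/
lemma IsBispecial.desubst {w : List Bool} (h : IsBispecial fibWord w) (hw : w ≠ []) :
    ∃ u, w = phiW u ++ [false] ∧ IsBispecial fibWord u := by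
  obtain ⟨i₀, h₀⟩ := h.1
  obtain ⟨⟨ra, hra⟩, ⟨la, hla⟩⟩ := h.extensions false
  obtain ⟨⟨rb, hrb⟩, ⟨lb, hlb⟩⟩ := h.extensions true
  have hfirst : fibWord i₀ = false := by
    cases w with
    | nil => exact absurd rfl hw
    | cons x t =>
      rw [occursAt_cons, occursAt_cons] at hlb
      rw [occursAt_cons] at h₀
      rw [h₀.1, ← hlb.2.1]
      exact fibWord_succ_of_true hlb.1
  have hlast : ∃ t, w = t ++ [false] := by
    refine ⟨w.dropLast, ?_⟩
    conv_lhs => rw [← List.dropLast_append_getLast hw]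
    congr 2
    cases hx : w.getLast hw
    · rfl
    · rw [← List.dropLast_append_getLast hw, hx, List.append_assoc, occursAt_append] at hrb
      have h2 := hrb.2
      rw [List.singleton_append, occursAt_cons, occursAt_cons] at h2
      have := fibWord_succ_of_true h2.1
      rw [h2.2.1] at this
      simp at this
  obtain ⟨t, rfl⟩ := hlast
  obtain ⟨m₀, rfl⟩ := exists_blockStart_of_false hfirst
  obtain ⟨u, rfl⟩ := exists_desubst t m₀ h₀
  refine ⟨u, rfl, ⟨m₀, (occursAt_phiW u m₀).1 h₀⟩,
    ⟨false, true, by decide, ?_, ?_⟩, ⟨false, true, by decide, ?_, ?_⟩⟩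
  · -- `φ(u)ab` can only be continued by the image `ab` of `a` after `φ(u)`
    rw [occursAt_append] at hrb
    obtain ⟨m, rfl, hm⟩ := occursAt_phiW' u rb hrb.1
    refine ⟨m, ?_⟩
    rw [occursAt_append, occursAt_cons]
    refine ⟨hm, ?_, occursAt_nil _ _⟩
    have h2 := hrb.2
    rw [occursAt_cons, List.length_append, List.length_singleton, ← add_assoc,
      ← blockStart_add hm, fibWord_blockStart_succ] at h2
    simpa using h2.1
  · have : phiW u ++ [false] ++ [false] = phiW (u ++ [true]) ++ [false] := by
      rw [phiW_append]; rfl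
    rw [this] at hra
    obtain ⟨m, -, hm⟩ := occursAt_phiW' _ ra hra
    exact ⟨m, hm⟩
  · rw [occursAt_cons] at hlb
    obtain ⟨n, hn, hn'⟩ := exists_blockStart_of_true hlb.1
    rw [hn, occursAt_phiW] at hlb
    exact ⟨n, (occursAt_cons _ _ _ _).2 ⟨hn', hlb.2⟩⟩
  · have : false :: (phiW u ++ [false]) = phiW (true :: u) ++ [false] := rfl
    rw [this] at hla
    obtain ⟨m, -, hm⟩ := occursAt_phiW' _ la hla
    exact ⟨m, hm⟩

lemma IsBispecial.eq_bispecialWord {w : List Bool} (h : IsBispecial fibWord w) :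
    ∃ N, w = bispecialWord N := by
  induction hl : w.length using Nat.strong_induction_on generalizing w with
  | _ l ih =>
    by_cases hw : w = []
    · exact ⟨0, hw⟩
    · obtain ⟨u, rfl, hu⟩ := h.desubst hw
      obtain ⟨N, rfl⟩ := ih u.length
        (by rw [← hl, List.length_append, phiW_length, List.length_singleton]; omega) hu rfl
      exact ⟨N + 1, rfl⟩

lemma bispecialWord_length (N : ℕ) : (bispecialWord N).length + 2 = Nat.fib (N + 3) ∧
    (bispecialWord N).count false + 1 = Nat.fib (N + 2) := by
  induction N with
  | zero => simp [bispecialWord, Nat.fib_add_two]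
  | succ N ih =>
    have h : Nat.fib (N + 4) = Nat.fib (N + 2) + Nat.fib (N + 3) := Nat.fib_add_two
    rw [bispecialWord, List.length_append, List.count_append, phiW_length, phiW_count]
    simp only [List.length_singleton, List.count_singleton_self]
    rw [show N + 1 + 3 = N + 4 from rfl, show N + 1 + 2 = N + 3 from rfl, h]
    omega

/-- An occurrence of the `N`-th bispecial word starts at `|φᴺ(f₀⋯f_{m-1})|` for some `m`; the
formulas express this index and the number of letters `a` before it through the numbers of
letters `a` and `b` in `f₀⋯f_{m-1}`. -/
lemma occursAt_bispecialWord (N i : ℕ) (h : OccursAt fibWord (bispecialWord N) i) :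
    ∃ m, i = Nat.fib (N + 2) * countLetter fibWord false m +
        Nat.fib (N + 1) * countLetter fibWord true m ∧
      countLetter fibWord false i = Nat.fib (N + 1) * countLetter fibWord false m +
        Nat.fib N * countLetter fibWord true m := by
  induction N generalizing i with
  | zero =>
    refine ⟨i, ?_, ?_⟩
    · simp [countLetter_add_countLetter]
    · simp
  | succ N ih =>
    obtain ⟨j, rfl, hj⟩ := occursAt_phiW' _ i h
    obtain ⟨m, h1, h2⟩ := ih j hj
    refine ⟨m, ?_, by rw [countLetter_blockStart]; exact h1⟩
    rw [blockStart, h2]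
    conv_lhs => rw [h1]
    rw [Nat.fib_add_two (n := N + 1),
      show N + 1 + 1 = N + 2 from rfl, Nat.fib_add_two (n := N)]
    ring

/-- The matrix of consecutive Fibonacci numbers is unimodular. -/
lemma dvd_of_dvd_fib (H x y : ℤ) (N : ℕ)
    (h1 : H ∣ Nat.fib (N + 2) * x + Nat.fib (N + 1) * y)
    (h2 : H ∣ Nat.fib (N + 1) * x + Nat.fib N * y) : H ∣ x ∧ H ∣ y := by
  induction N with
  | zero =>
    simp at h1 h2
    exact ⟨h2, (dvd_add_right h2).1 h1⟩
  | succ N ih =>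
    refine ih h2 ?_
    have := dvd_sub h1 h2
    rw [Nat.fib_add_two (n := N + 1),
      show N + 1 + 1 = N + 2 from rfl] at this
    have e : ((Nat.fib (N + 2) : ℤ)) = Nat.fib N + Nat.fib (N + 1) := by
      exact_mod_cast Nat.fib_add_two
    push_cast at this
    rw [e] at this
    ring_nf at this ⊢
    exact this

/-! ### Balance -/

lemma tau_sq : tau ^ 2 = tau + 1 := by
  have h : Real.sqrt 5 ^ 2 = 5 := Real.sq_sqrt (by norm_num)
  unfold tau
  nlinarith

lemma one_lt_tau : 1 < tau := by
  have h : (1 : ℝ) < Real.sqrt 5 := by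
    rw [Real.lt_sqrt] <;> norm_num
  unfold tau
  linarith

/-- The discrepancy of every prefix of the Fibonacci word lies in `(-1, τ)`: passing from a word
to its image under `φ` multiplies the discrepancy by `-1/τ`, and every prefix
is such an image, possibly followed by one letter `a`. -/
lemma discrepancy (n : ℕ) :
    -1 < (countLetter fibWord false n : ℝ) - tau * countLetter fibWord true n ∧
      (countLetter fibWord false n : ℝ) - tau * countLetter fibWord true n < tau := by
  have ht := one_lt_tau
  have ht2 := tau_sq
  induction n using Nat.strong_induction_on with
  | _ n ih =>
    have key : ∀ m, tau * ((countLetter fibWord false (blockStart m) : ℝ)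
        - tau * countLetter fibWord true (blockStart m)) =
        -((countLetter fibWord false m : ℝ) - tau * countLetter fibWord true m) := by
      intro m
      have h1 := countLetter_add_countLetter fibWord m
      have h2 := countLetter_add_countLetter fibWord (blockStart m)
      rw [countLetter_blockStart] at h2
      have h3 : countLetter fibWord true (blockStart m) = countLetter fibWord false m := by
        have : blockStart m = m + countLetter fibWord false m := rfl
        omega
      rw [countLetter_blockStart, h3]
      have h1' : (m : ℝ) = countLetter fibWord false m + countLetter fibWord true m := by
        exact_mod_cast h1.symm
      rw [h1']
      linear_combination (-(countLetter fibWord false m : ℝ)) * ht2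
    have bound : ∀ m, m < n →
        -1 < (countLetter fibWord false (blockStart m) : ℝ)
          - tau * countLetter fibWord true (blockStart m) ∧
        (countLetter fibWord false (blockStart m) : ℝ)
          - tau * countLetter fibWord true (blockStart m) < tau - 1 := by
      intro m hm
      obtain ⟨h1, h2⟩ := ih m hm
      have k := key m
      generalize (countLetter fibWord false (blockStart m) : ℝ)
          - tau * countLetter fibWord true (blockStart m) = X at k ⊢
      constructor
      · by_contra hX
        nlinarith [mul_le_mul_of_nonneg_left (not_lt.1 hX) (by linarith : (0 : ℝ) ≤ tau)]
      · by_contra hX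
        nlinarith [mul_le_mul_of_nonneg_left (not_lt.1 hX) (by linarith : (0 : ℝ) ≤ tau)]
    have pos : ∀ m, 0 < m → m < blockStart m := by
      intro m hm
      have h0 : fibWord 0 = false := by decide
      have := countLetter_mono fibWord false (show 0 + 1 ≤ m from hm)
      rw [countLetter_succ, h0] at this
      simp at this
      unfold blockStart
      omega
    obtain ⟨m, hm⟩ := exists_block n
    rcases Nat.eq_zero_or_pos n with rfl | hn
    · simp [countLetter_zero]
      linarith
    rcases hm with rfl | ⟨rfl, -⟩
    · have hm : 0 < m := by
        rcases Nat.eq_zero_or_pos m with rfl | h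
        · simp [blockStart, countLetter_zero] at hn
        · exact h
      obtain ⟨h1, h2⟩ := bound m (pos m hm)
      constructor <;> linarith
    · have h := bound m (by unfold blockStart; omega)
      rw [countLetter_succ, countLetter_succ, fibWord_blockStart]
      simp only [if_true, Bool.false_eq_true, if_false, add_zero]
      push_cast
      constructor <;> linarith

/-! ### The colouring -/

lemma yseq_eq_one_iff (δ i : ℕ) : yseq δ i = 1 ↔ 2 ^ (δ - 1) ∣ i := by
  unfold yseq
  split_ifs with h
  · simp [h]
  · refine ⟨fun h' => absurd ?_ h, fun h' => absurd h' h⟩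
    have h2 : δ - 1 = padicValNat 2 i := by omega
    rw [h2]
    exact pow_padicValNat_dvd

lemma padicValNat_le_of_modEq {d a b : ℕ} (h : a ≡ b [MOD 2 ^ d]) (ha : ¬ 2 ^ d ∣ a)
    (hb : b ≠ 0) : padicValNat 2 a ≤ padicValNat 2 b := by
  have ha0 : a ≠ 0 := by rintro rfl; simp at ha
  have hlt : padicValNat 2 a ≤ d := by
    by_contra hc
    exact ha ((pow_dvd_pow 2 (by omega)).trans (pow_padicValNat_dvd (n := a) (p := 2)))
  rw [← padicValNat_dvd_iff_le hb]
  exact ((h.dvd_iff (pow_dvd_pow 2 hlt)).1 pow_padicValNat_dvd)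

lemma yseq_congr {δ a b : ℕ} (h : a ≡ b [MOD 2 ^ (δ - 1)]) : yseq δ a = yseq δ b := by
  unfold yseq
  have hd := h.dvd_iff (dvd_refl (2 ^ (δ - 1)))
  by_cases ha : 2 ^ (δ - 1) ∣ a
  · rw [if_pos ha, if_pos (hd.1 ha)]
  · have hb : ¬ 2 ^ (δ - 1) ∣ b := fun hb => ha (hd.2 hb)
    rw [if_neg ha, if_neg hb]
    have ha0 : a ≠ 0 := by rintro rfl; simp at ha
    have hb0 : b ≠ 0 := by rintro rfl; simp at hb
    rw [le_antisymm (padicValNat_le_of_modEq h ha hb0) (padicValNat_le_of_modEq h.symm hb ha0)]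

lemma piMap_vdelta (δ i : ℕ) : piMap (vdelta δ i) = fibWord i := by
  unfold vdelta
  cases fibWord i <;> simp [piMap]

lemma elim_vdelta (δ i : ℕ) :
    Sum.elim id id (vdelta δ i) = yseq δ (countLetter fibWord (fibWord i) i) := by
  unfold vdelta
  cases fibWord i <;> simp

lemma OccursAt.discolour {δ : ℕ} {w : List (ℕ ⊕ ℕ)} {i : ℕ} (h : OccursAt (vdelta δ) w i) :
    OccursAt fibWord (w.map piMap) i := by
  rw [occursAt_iff] at h ⊢
  intro k hk
  rw [List.getElem_map, ← h k (by simpa using hk), piMap_vdelta]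

/-- If `w` contains at least `H` letters projecting to `c`, its occurrences determine modulo `H`
the number of letters projecting to `c` that precede them: the letter `1` of the constant gap
sequence appears in the window and locates the multiples of `H`. -/
lemma countLetter_modEq {δ : ℕ} {w : List (ℕ ⊕ ℕ)} {i j : ℕ} (c : Bool)
    (hc : 2 ^ (δ - 1) ≤ (w.map piMap).count c)
    (hi : OccursAt (vdelta δ) w i) (hj : OccursAt (vdelta δ) w j) :
    countLetter fibWord c i ≡ countLetter fibWord c j [MOD 2 ^ (δ - 1)] := by
  set H := 2 ^ (δ - 1) with hH
  have hHpos : 0 < H := by positivity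
  have hcnt := count_factorAt fibWord c i (w.map piMap).length
  rw [show factorAt fibWord i (w.map piMap).length = _ from hi.discolour] at hcnt
  -- the least multiple of `H` that is at least the count at `i`
  obtain ⟨k, hk1, hk2, hk3⟩ : ∃ k, countLetter fibWord c i ≤ k ∧
      k < countLetter fibWord c i + H ∧ H ∣ k := by
    refine ⟨H * ((countLetter fibWord c i + (H - 1)) / H), ?_, ?_, dvd_mul_right _ _⟩
    · have := Nat.div_add_mod (countLetter fibWord c i + (H - 1)) H
      have := Nat.mod_lt (countLetter fibWord c i + (H - 1)) hHpos
      omega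
    · have := Nat.mul_div_le (countLetter fibWord c i + (H - 1)) H
      omega
  obtain ⟨t, ht, hft, htk⟩ := exists_countLetter_eq fibWord c i (w.map piMap).length k hk1
    (by omega)
  rw [List.length_map] at ht
  have hv : vdelta δ (i + t) = vdelta δ (j + t) := by
    rw [(occursAt_iff _ _ _).1 hi t ht, (occursAt_iff _ _ _).1 hj t ht]
  have hfj : fibWord (j + t) = c := by rw [← piMap_vdelta δ, ← hv, piMap_vdelta, hft]
  have hy := congrArg (Sum.elim id id) hv
  rw [elim_vdelta, elim_vdelta, hft, hfj, htk, (yseq_eq_one_iff δ k).2 hk3] at hy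
  have hdj := (yseq_eq_one_iff δ _).1 hy.symm
  have hfac : factorAt fibWord i t = factorAt fibWord j t := by
    unfold factorAt
    refine List.map_congr_left fun s hs => ?_
    have hs' : s < w.length := (List.mem_range.1 hs).trans ht
    rw [← piMap_vdelta δ, ← piMap_vdelta δ, (occursAt_iff _ _ _).1 hi s hs',
      (occursAt_iff _ _ _).1 hj s hs']
  have e1 := count_factorAt fibWord c i t
  have e2 := count_factorAt fibWord c j t
  rw [htk, hfac] at e1
  refine Nat.ModEq.add_right_cancel' ((factorAt fibWord j t).count c) ?_
  rw [← e1, ← e2]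
  exact ((Nat.modEq_zero_iff_dvd.2 hk3).trans (Nat.modEq_zero_iff_dvd.2 hdj).symm)

lemma vdelta_congr {δ i j : ℕ} (hf : fibWord i = fibWord j)
    (h : ∀ c, countLetter fibWord c i ≡ countLetter fibWord c j [MOD 2 ^ (δ - 1)]) :
    vdelta δ i = vdelta δ j := by
  unfold vdelta
  rw [hf, yseq_congr (h false), yseq_congr (h true)]

/-- Discolouring a bispecial factor with enough letters of both kinds: two extensions on the same
side that project to the same letter would have the same colour. -/
lemma IsBispecial.discolour {δ : ℕ} {w : List (ℕ ⊕ ℕ)} (h : IsBispecial (vdelta δ) w)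
    (hc : ∀ c, 2 ^ (δ - 1) ≤ (w.map piMap).count c) : IsBispecial fibWord (w.map piMap) := by
  obtain ⟨⟨i, hi⟩, ⟨x, y, hxy, ⟨p, hp⟩, ⟨q, hq⟩⟩, ⟨z, t, hzt, ⟨r, hr⟩, ⟨s, hs⟩⟩⟩ := h
  refine ⟨⟨i, hi.discolour⟩, ⟨piMap x, piMap y, ?_, ⟨p, ?_⟩, ⟨q, ?_⟩⟩,
    ⟨piMap z, piMap t, ?_, ⟨r, ?_⟩, ⟨s, ?_⟩⟩⟩
  · intro he
    apply hxy
    rw [occursAt_append, occursAt_cons] at hp hq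
    rw [← hp.2.1, ← hq.2.1, piMap_vdelta, piMap_vdelta] at he
    rw [← hp.2.1, ← hq.2.1]
    refine vdelta_congr he fun c => ?_
    have e1 := hp.1.discolour
    have e2 := hq.1.discolour
    unfold OccursAt at e1 e2
    rw [List.length_map] at e1 e2
    rw [count_factorAt, count_factorAt, e1, e2]
    exact (countLetter_modEq c (hc c) hp.1 hq.1).add_right _
  · simpa using hp.discolour
  · simpa using hq.discolour
  · intro he
    apply hzt
    rw [occursAt_cons] at hr hs
    rw [← hr.1, ← hs.1, piMap_vdelta, piMap_vdelta] at he
    rw [← hr.1, ← hs.1]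
    refine vdelta_congr he fun c => ?_
    have := countLetter_modEq c (hc c) hr.2 hs.2
    rw [countLetter_succ, countLetter_succ, he] at this
    exact this.add_right_cancel' _
  · simpa using hr.discolour
  · simpa using hs.discolour

/-- Lemma 4 of the paper: for a sufficiently long bispecial factor w of
v_δ and any return word v to w, there are N, κ, λ ∈ ℕ with κ + λ ≥ 1 such that
|w| = F_{N+3} − 2, |v| = H(κF_{N+2} + λF_{N+1}) and |κ − τλ| < τ²/H, where H = 2^(δ-1). -/
theorem length_of_return_word_to_bispecial (δ : ℕ) (hδ : 1 ≤ δ) (w : List (ℕ ⊕ ℕ))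
    (hbis : IsBispecial (vdelta δ) w)
    (ha : 2 ^ (δ - 1) ≤ (w.map piMap).count false)
    (hb : 2 ^ (δ - 1) ≤ (w.map piMap).count true)
    (v : List (ℕ ⊕ ℕ)) (hv : IsReturnWord (vdelta δ) w v) :
    ∃ N k l : ℕ, 1 ≤ k + l ∧
      w.length = Nat.fib (N + 3) - 2 ∧
      v.length = 2 ^ (δ - 1) * (k * Nat.fib (N + 2) + l * Nat.fib (N + 1)) ∧
      |(k : ℝ) - tau * l| < tau ^ 2 / 2 ^ (δ - 1) := by
  have hc : ∀ c, 2 ^ (δ - 1) ≤ (w.map piMap).count c := by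
    intro c
    cases c
    · exact ha
    · exact hb
  obtain ⟨N, hN⟩ := (hbis.discolour hc).eq_bispecialWord
  obtain ⟨i, j, hij, hi, hj, -, rfl⟩ := hv
  have hmod := fun c => countLetter_modEq c (hc c) hi hj
  have hi' := hi.discolour
  have hj' := hj.discolour
  rw [hN] at hi' hj'
  obtain ⟨m, hm1, hm2⟩ := occursAt_bispecialWord N i hi'
  obtain ⟨n, hn1, hn2⟩ := occursAt_bispecialWord N j hj'
  have hmn : m < n := by
    by_contra hcon
    have h1 := Nat.mul_le_mul_left (Nat.fib (N + 2))
      (countLetter_mono fibWord false (not_lt.1 hcon))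
    have h2 := Nat.mul_le_mul_left (Nat.fib (N + 1))
      (countLetter_mono fibWord true (not_lt.1 hcon))
    omega
  obtain ⟨x, hx⟩ := Nat.exists_eq_add_of_le (countLetter_mono fibWord false hmn.le)
  obtain ⟨y, hy⟩ := Nat.exists_eq_add_of_le (countLetter_mono fibWord true hmn.le)
  have hlen : j - i = Nat.fib (N + 2) * x + Nat.fib (N + 1) * y := by
    rw [hx, hy, mul_add, mul_add] at hn1
    omega
  have hcount : countLetter fibWord false j =
      countLetter fibWord false i + (Nat.fib (N + 1) * x + Nat.fib N * y) := by
    rw [hn2, hm2, hx, hy]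
    ring
  have hda : 2 ^ (δ - 1) ∣ Nat.fib (N + 1) * x + Nat.fib N * y := by
    have := (Nat.modEq_iff_dvd' (countLetter_mono fibWord false hij.le)).1 (hmod false)
    rwa [hcount, Nat.add_sub_cancel_left] at this
  have hdl : 2 ^ (δ - 1) ∣ Nat.fib (N + 2) * x + Nat.fib (N + 1) * y := by
    have := (hmod false).add (hmod true)
    rw [countLetter_add_countLetter, countLetter_add_countLetter] at this
    rw [← hlen]
    exact (Nat.modEq_iff_dvd' hij.le).1 this
  obtain ⟨hdx, hdy⟩ := dvd_of_dvd_fib ((2 ^ (δ - 1) : ℕ) : ℤ) x y N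
    (by exact_mod_cast hdl) (by exact_mod_cast hda)
  obtain ⟨k, rfl⟩ := Int.natCast_dvd_natCast.1 hdx
  obtain ⟨l, rfl⟩ := Int.natCast_dvd_natCast.1 hdy
  refine ⟨N, k, l, ?_, ?_, ?_, ?_⟩
  · by_contra hcon
    obtain ⟨rfl, rfl⟩ : k = 0 ∧ l = 0 := by omega
    simp at hlen
    omega
  · have := (bispecialWord_length N).1
    rw [← hN, List.length_map] at this
    omega
  · rw [factorAt_length, hlen]
    ring
  · have dm := discrepancy m
    have dn := discrepancy n
    rw [hx, hy] at dn
    push_cast at dn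
    have hH : (0 : ℝ) < 2 ^ (δ - 1) := by positivity
    have habs : |(k : ℝ) - tau * l| * 2 ^ (δ - 1) = |((k : ℝ) - tau * l) * 2 ^ (δ - 1)| := by
      rw [abs_mul, abs_of_pos hH]
    rw [lt_div_iff₀ hH, habs, tau_sq, abs_lt]
    constructor <;> nlinarith only [dm.1, dm.2, dn.1, dn.2]
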